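/- Let x₀ ∈ ℝ and let f : ℝ → ℝ be specularly differentiable at every point of some neighborhood of x₀, continuous on that neighborhood, and suppose the function x ↦ f^S(x) is continuous at x₀. Then f is differentiable at x₀ and f'(x₀) = f^S(x₀). -/

import Mathlib

open Filter Topology Set

/-- The combination function `A(α,β)` from the paper: the slope of the specular
tangent determined by one-sided slopes `α` (right) and `β` (left). -/
noncomputable def specA (α β : ℝ) : ℝ :=
  if α + β = 0 then 0
  else (α * β - 1 + Real.sqrt ((α ^ 2 + 1) * (β ^ 2 + 1))) / (α + β)

/-- `HasSpecData f x₀ L α β` means: the left and right limits of `f` at `x₀` both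
exist and are equal to `L`, the right specular derivative of `f` at `x₀` is `α`,
and the left specular derivative of `f` at `x₀` is `β`. -/
def HasSpecData (f : ℝ → ℝ) (x₀ L α β : ℝ) : Prop :=
  Tendsto f (𝓝[<] x₀) (𝓝 L) ∧ Tendsto f (𝓝[>] x₀) (𝓝 L) ∧
    Tendsto (fun x => (f x - L) / (x - x₀)) (𝓝[>] x₀) (𝓝 α) ∧
    Tendsto (fun x => (f x - L) / (x - x₀)) (𝓝[<] x₀) (𝓝 β)

/-- `f` is specularly differentiable at `x₀`. -/
def SpecDifferentiableAt (f : ℝ → ℝ) (x₀ : ℝ) : Prop :=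
  ∃ L α β, HasSpecData f x₀ L α β

/-- `f` is specularly differentiable at `x₀` with specular derivative `d`. -/
def HasSpecDerivAt (f : ℝ → ℝ) (x₀ d : ℝ) : Prop :=
  ∃ L α β, HasSpecData f x₀ L α β ∧ d = specA α β

theorem le_specA {m α β : ℝ} (ha : m ≤ α) (hb : m ≤ β) : m ≤ specA α β := by
  have key : ∀ α β : ℝ, α ≤ β → α ≤ specA α β := by
    intro α β hab
    unfold specA
    split_ifs with h
    · linarith
    · rcases lt_or_gt_of_ne h with h | h
      · rw [le_div_iff_of_neg h]
        have : Real.sqrt ((α ^ 2 + 1) * (β ^ 2 + 1)) ≤ α ^ 2 + 1 := by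
          apply Real.sqrt_le_iff.2
          refine ⟨by positivity, ?_⟩
          rw [sq (α ^ 2 + 1)]
          apply mul_le_mul_of_nonneg_left _ (by positivity)
          nlinarith
        nlinarith
      · rw [le_div_iff₀ h]
        have : α ^ 2 + 1 ≤ Real.sqrt ((α ^ 2 + 1) * (β ^ 2 + 1)) := by
          apply Real.le_sqrt_of_sq_le
          rw [sq (α ^ 2 + 1)]
          apply mul_le_mul_of_nonneg_left _ (by positivity)
          nlinarith
        nlinarith
  have comm : specA α β = specA β α := by
    unfold specA
    rw [add_comm α β, mul_comm α β, mul_comm (α ^ 2 + 1)]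
  rcases le_total α β with h | h
  · exact ha.trans (key _ _ h)
  · rw [comm]; exact hb.trans (key _ _ h)

theorem specA_neg (α β : ℝ) : specA (-α) (-β) = -specA α β := by
  unfold specA
  have : -α + -β = -(α + β) := by ring
  simp only [this, neg_eq_zero, neg_sq, neg_mul_neg, div_neg]
  split_ifs <;> simp

theorem HasSpecDerivAt.neg_fun {f : ℝ → ℝ} {x d : ℝ} (h : HasSpecDerivAt f x d) :
    HasSpecDerivAt (fun x => - f x) x (-d) := by
  obtain ⟨L, α, β, ⟨h1, h2, h3, h4⟩, rfl⟩ := h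
  refine ⟨-L, -α, -β, ⟨h1.neg, h2.neg, ?_, ?_⟩, (specA_neg _ _).symm⟩
  · refine h3.neg.congr fun y => ?_
    ring
  · refine h4.neg.congr fun y => ?_
    ring

theorem countable_localMin_values (h : ℝ → ℝ) :
    {y | ∃ c, IsLocalMin h c ∧ h c = y}.Countable := by
  refine (Set.countable_range (fun p : ℚ × ℚ => sInf (h '' Ioo (p.1 : ℝ) (p.2 : ℝ)))).mono ?_
  rintro y ⟨c, hc, rfl⟩
  obtain ⟨l, u, ⟨hl, hu⟩, hsub⟩ := mem_nhds_iff_exists_Ioo_subset.1 hc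
  obtain ⟨p, hp1, hp2⟩ := exists_rat_btwn hl
  obtain ⟨q, hq1, hq2⟩ := exists_rat_btwn hu
  refine ⟨(p, q), ?_⟩
  apply IsLeast.csInf_eq
  refine ⟨⟨c, ⟨hp2, hq1⟩, rfl⟩, ?_⟩
  rintro _ ⟨x, ⟨hx1, hx2⟩, rfl⟩
  exact hsub ⟨hp1.trans hx1, hx2.trans hq2⟩

theorem specular_mvt {f g : ℝ → ℝ} {a b M : ℝ} (hab : a ≤ b)
    (hspec : ∀ x ∈ Icc a b, HasSpecDerivAt f x (g x))
    (hf : ∀ x ∈ Icc a b, ContinuousAt f x) (hg : ∀ x ∈ Icc a b, g x ≤ M) :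
    f b - f a ≤ M * (b - a) := by
  by_contra! hcon
  have hab' : a < b := by
    rcases hab.lt_or_eq with h | h
    · exact h
    · subst h; simp at hcon
  obtain ⟨m, hm1, hm2⟩ := exists_between ((lt_div_iff₀ (sub_pos.2 hab')).2 hcon)
  rw [lt_div_iff₀ (sub_pos.2 hab')] at hm2
  set h : ℝ → ℝ := fun x => f x - m * x with hh
  have hlt : h a < h b := by simp only [hh]; nlinarith
  have hc : ∀ x ∈ Icc a b, ContinuousAt h x := fun x hx => (hf x hx).sub (by fun_prop)
  obtain ⟨y, ⟨hy1, hy2⟩, hy⟩ : ∃ y ∈ Ioo (h a) (h b), y ∉ {y | ∃ c, IsLocalMin h c ∧ h c = y} := by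
    by_contra! H
    have : (Ioo (h a) (h b)).Countable := (countable_localMin_values h).mono H
    rw [Cardinal.Real.Ioo_countable_iff] at this
    linarith
  have hcl : IsCompact (Icc a b ∩ h ⁻¹' Iic y) := by
    refine isCompact_Icc.of_isClosed_subset ?_ inter_subset_left
    exact ContinuousOn.preimage_isClosed_of_isClosed
      (fun x hx => (hc x hx).continuousWithinAt) isClosed_Icc isClosed_Iic
  obtain ⟨c, ⟨hcab, hcy⟩, hmax⟩ := hcl.exists_isGreatest ⟨a, ⟨le_refl a, hab⟩, hy1.le⟩
  have hcy' : h c ≤ y := hcy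
  have hcb : c < b := by
    rcases hcab.2.lt_or_eq with h' | h'
    · exact h'
    · rw [h'] at hcy'; linarith
  have hright : ∀ x, c < x → x ≤ b → y < h x := by
    intro x hx hxb
    by_contra! H
    have := hmax ⟨⟨hcab.1.trans hx.le, hxb⟩, H⟩
    linarith
  have hev : ∀ᶠ x in 𝓝[>] c, y < h x := by
    filter_upwards [Ioc_mem_nhdsGT hcb] with x hx using hright x hx.1 hx.2
  have hceq : h c = y := by
    refine le_antisymm hcy' ?_
    exact ge_of_tendsto ((hc c hcab).tendsto.mono_left nhdsWithin_le_nhds)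
      (hev.mono fun x hx => hx.le)
  have hleft : ∃ᶠ x in 𝓝[<] c, h x < y := by
    intro H
    apply hy
    refine ⟨c, ?_, hceq⟩
    have H' : ∀ᶠ x in 𝓝[<] c, h c ≤ h x := H.mono fun x hx => by rw [hceq]; exact not_lt.1 hx
    have H2 : ∀ᶠ x in 𝓝[>] c, h c ≤ h x := hev.mono fun x hx => by rw [hceq]; exact hx.le
    have H3 : ∀ᶠ x in 𝓝[≠] c, h c ≤ h x := by
      rw [← Iio_union_Ioi, nhdsWithin_union]
      exact eventually_sup.2 ⟨H', H2⟩
    rw [eventually_nhdsWithin_iff] at H3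
    refine H3.mono fun x hx => ?_
    by_cases hxc : x = c
    · rw [hxc]
    · exact hx hxc
  obtain ⟨L, α, β, ⟨-, h2, h3, h4⟩, hgc⟩ := hspec c hcab
  have hL : L = f c :=
    tendsto_nhds_unique h2 ((hf c hcab).tendsto.mono_left nhdsWithin_le_nhds)
  subst hL
  have hα : m ≤ α := by
    refine ge_of_tendsto h3 ?_
    filter_upwards [hev, self_mem_nhdsWithin] with x hx hxc
    have hxc' : c < x := hxc
    rw [← hceq] at hx
    simp only [hh] at hx
    rw [le_div_iff₀ (sub_pos.2 hxc')]
    linarith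
  have hβ : m ≤ β := by
    refine ge_of_tendsto_of_frequently h4 ?_
    refine (hleft.and_eventually self_mem_nhdsWithin).mono ?_
    rintro x ⟨hx, hxc⟩
    have hxc' : x < c := hxc
    rw [← hceq] at hx
    simp only [hh] at hx
    rw [le_div_iff_of_neg (sub_neg.2 hxc')]
    linarith
  have := le_specA hα hβ
  have := hg c hcab
  linarith

theorem deriv_eq_specular_of_continuousAt (f g : ℝ → ℝ) (x₀ : ℝ) (s : Set ℝ)
    (hs : s ∈ 𝓝 x₀)
    (hspec : ∀ x ∈ s, HasSpecDerivAt f x (g x))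
    (hf : ∀ x ∈ s, ContinuousAt f x)
    (hg : ContinuousAt g x₀) :
    HasDerivAt f (g x₀) x₀ := by
  rw [hasDerivAt_iff_isLittleO, Asymptotics.isLittleO_iff]
  intro ε hε
  have hnear : ∀ᶠ x in 𝓝 x₀, x ∈ s ∧ |g x - g x₀| < ε := by
    refine (eventually_mem_set.2 hs).and ?_
    have := Metric.tendsto_nhds.1 hg.tendsto ε hε
    simpa [Real.dist_eq] using this
  obtain ⟨δ, hδ, hball⟩ := Metric.eventually_nhds_iff_ball.1 hnear
  have main : ∀ a b, a ≤ b → a ∈ Metric.ball x₀ δ → b ∈ Metric.ball x₀ δ →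
      |f b - f a - (b - a) * g x₀| ≤ ε * (b - a) := by
    intro a b hab ha hb
    have hsub : ∀ x ∈ Icc a b, x ∈ s ∧ |g x - g x₀| < ε := by
      intro x hx
      apply hball
      rw [Real.ball_eq_Ioo] at *
      exact ⟨ha.1.trans_le hx.1, hx.2.trans_lt hb.2⟩
    have h1 := specular_mvt (M := g x₀ + ε) hab (fun x hx => hspec x (hsub x hx).1)
      (fun x hx => hf x (hsub x hx).1)
      (fun x hx => by have := (abs_lt.1 (hsub x hx).2).2; linarith)
    have h2 := specular_mvt (f := fun x => - f x) (g := fun x => - g x) (M := - g x₀ + ε) hab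
      (fun x hx => (hspec x (hsub x hx).1).neg_fun)
      (fun x hx => (hf x (hsub x hx).1).neg)
      (fun x hx => by have := (abs_lt.1 (hsub x hx).2).1; linarith)
    rw [abs_le]
    constructor <;> linarith
  filter_upwards [Metric.ball_mem_nhds x₀ hδ] with x hx
  simp only [Real.norm_eq_abs, smul_eq_mul]
  have hx0 := Metric.mem_ball_self (x := x₀) hδ
  rcases le_total x₀ x with h | h
  · rw [abs_of_nonneg (sub_nonneg.2 h)]
    exact main x₀ x h hx0 hx
  · rw [abs_of_nonpos (sub_nonpos.2 h)]
    have := main x x₀ h hx hx0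
    rw [← abs_neg]
    convert this using 2 <;> ring
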